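/- arXiv:2312.02842 — 4 statements merged into one kernel-verified Lean document; each statement's English description precedes it below -/
import Mathlib

section
/- (Combinatorial Centroid Criterion, stable case; Theorem 3.9.) Let S be a nonempty subset of Ξ_{k,l}. Then the centroid O_{k,l} lies in the topological interior of the convex hull in ℝ^{m+n} of ξ(S) = {ξ(I) : I ∈ S} if and only if there is NO nonzero weight vector λ = (r_0,…,r_m,s_0,…,s_n) ∈ ℤ^{m+n+2} with ∑_{i=0}^m r_i = 0 and ∑_{j=0}^n s_j = 0 such that ⟨I,λ⟩ ≥ 0 for every I ∈ S. (This is the torus form of the statement that the divisor of bidegree (k,l) with monomial support S is GIT stable if and only if O_{k,l} ∈ Int(Conv(ξ(S))).) -/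
/-!
For a weight `(r, s)` with both coordinate sums zero, the function `I ↦ ⟨I, (r, s)⟩` on monomials of
bidegree `(k, l)` equals `f (ξ I) - f O`, where `O` is the centroid and `f` is the linear functional
with coefficients `r_i - r_m` and `s_j - s_n` (`sum_mul_eq_sum_slopes`). Every functional arises from
exactly one such weight (`exists_balanced`, `eq_zero_of_balanced`), so the nonzero *real* weights
with all `⟨I, (r, s)⟩ ≥ 0`, called destabilising below, correspond to the nonzero
functionals that attain over `ξ(S) ∪ {O}` their minimum at `O`. By the supporting hyperplane theorem,
these exist if and only if `O` is not interior to the convex hull of `ξ(S)`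
(`mem_interior_convexHull_iff`).

It remains to replace a real destabilising weight by an integral one. Any `ℚ`-linear map `ψ : ℝ → ℚ`
preserves the vanishing of rational linear combinations of the weights, and since the identity
of `ℝ` is a pointwise limit of such maps, `ψ` can be chosen to preserve the
positivity of any prescribed finite set of reals (`exists_rat_linear_pos`). Applied to the finitely
many values `⟨I, (r, s)⟩` and to `±r_i`, `±s_j`, such a `ψ` turns the weight into a nonzero rational
destabilising weight, and clearing denominators finishes the argument.
-/

/-- Supporting hyperplane criterion: a point is interior to the convex hull of a nonempty set if and
only if no nonzero functional is minimised at it. If the hull has empty interior, the functional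
comes from a hyperplane parallel to its affine span. -/
theorem mem_interior_convexHull_iff {E : Type*} [NormedAddCommGroup E] [NormedSpace ℝ E]
    [FiniteDimensional ℝ E] {T : Set E} (hT : T.Nonempty) (x : E) :
    x ∈ interior (convexHull ℝ T) ↔ ¬ ∃ f : E →L[ℝ] ℝ, f ≠ 0 ∧ ∀ y ∈ T, f x ≤ f y := by
  constructor
  · rintro hx ⟨f, hf, hfT⟩
    have hK : convexHull ℝ T ⊆ {y | f x ≤ f y} :=
      convexHull_min hfT (convex_halfSpace_ge f.toLinearMap.isLinear _)
    have hmin : IsLocalMin f x := by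
      filter_upwards [mem_interior_iff_mem_nhds.1 hx] with y hy using hK hy
    exact hf (by simpa using hmin.fderiv_eq_zero)
  · intro h
    by_contra hx
    apply h
    by_cases hne : (interior (convexHull ℝ T)).Nonempty
    · obtain ⟨f, hf, hfx⟩ := geometric_hahn_banach_of_nonempty_interior_point
        (convex_convexHull ℝ T) hx hne
      exact ⟨-f, by simpa using hf, fun y hy => by
        simpa using hfx y (subset_convexHull ℝ T hy)⟩
    · rw [interior_convexHull_nonempty_iff_affineSpan_eq_top] at hne
      have hlt : vectorSpan ℝ T < ⊤ := by
        rw [lt_top_iff_ne_top]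
        intro htop
        exact hne ((AffineSubspace.affineSpan_eq_top_iff_vectorSpan_eq_top_of_nonempty
          ℝ E E hT).2 htop)
      obtain ⟨g, hg, hgker⟩ := Submodule.exists_le_ker_of_lt_top _ hlt
      obtain ⟨t, ht⟩ := hT
      have hconst : ∀ y ∈ T, g y = g t := by
        intro y hy
        have := hgker (vsub_mem_vectorSpan ℝ hy ht)
        rw [LinearMap.mem_ker, vsub_eq_sub, map_sub] at this
        linarith
      have hg' : LinearMap.toContinuousLinearMap g ≠ 0 := by simpa using hg
      -- `g` is constant on `T`, so either `g` or `-g` has the required sign.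
      rcases le_total (g x) (g t) with hle | hle
      · exact ⟨LinearMap.toContinuousLinearMap g, hg', fun y hy => by
          simpa [hconst y hy] using hle⟩
      · exact ⟨-LinearMap.toContinuousLinearMap g, neg_ne_zero.2 hg', fun y hy => by
          simpa [hconst y hy] using hle⟩

/-- There are `ℚ`-linear maps `ℝ → ℚ` preserving the positivity of finitely many reals: the
coordinates of a Hamel basis are perturbed to nearby rational numbers. -/
theorem exists_rat_linear_pos {F : Set ℝ} (hF : F.Finite) :
    ∃ ψ : ℝ →ₗ[ℚ] ℚ, ∀ w ∈ F, 0 < w → 0 < ψ w := by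
  let b := Module.Basis.ofVectorSpace ℚ ℝ
  let φ : (Module.Basis.ofVectorSpaceIndex ℚ ℝ → ℝ) → ℝ → ℝ :=
    fun a w => (b.repr w).sum fun t c => (c : ℝ) * a t
  have hφ : ∀ w, Continuous fun a => φ a w := fun w =>
    continuous_finsetSum _ fun t _ => continuous_const.mul (continuous_apply t)
  have hφb : ∀ w, φ b w = w := fun w => by
    conv_rhs => rw [← b.linearCombination_repr w]
    simp [φ, Finsupp.linearCombination_apply, Rat.smul_def]
  let U : Set (Module.Basis.ofVectorSpaceIndex ℚ ℝ → ℝ) :=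
    ⋂ w ∈ F ∩ {w | 0 < w}, {a | 0 < φ a w}
  have hU : IsOpen U := (hF.inter_of_left _).isOpen_biInter fun w _ =>
    isOpen_lt continuous_const (hφ w)
  have hbU : (b : _ → ℝ) ∈ U := by
    simp only [U, Set.mem_iInter, Set.mem_ofPred_eq, hφb]
    exact fun w hw => hw.2
  have hdense : DenseRange (Pi.map fun (_ : Module.Basis.ofVectorSpaceIndex ℚ ℝ) (q : ℚ) =>
      (q : ℝ)) := DenseRange.piMap fun _ => Rat.denseRange_cast
  obtain ⟨a, ha⟩ := hdense.exists_mem_open hU ⟨_, hbU⟩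
  refine ⟨b.constr ℚ a, fun w hw hpos => ?_⟩
  have h : 0 < φ (Pi.map (fun _ (q : ℚ) => (q : ℝ)) a) w :=
    (Set.mem_iInter₂.1 ha) w ⟨hw, hpos⟩
  have hcast : φ (Pi.map (fun _ (q : ℚ) => (q : ℝ)) a) w = ((b.constr ℚ a w : ℚ) : ℝ) := by
    simp [φ, Module.Basis.constr_apply, Finsupp.sum]
  rw [hcast] at h
  exact_mod_cast h

theorem sum_mul_eq_sum_slopes {m : ℕ} (r κ : Fin (m + 1) → ℝ) (k : ℝ)
    (hr : ∑ i, r i = 0) (hκ : ∑ i, κ i = k) :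
    ∑ i, r i * κ i = (∑ i : Fin m, (r i.castSucc - r (Fin.last m)) * κ i.castSucc)
      - ∑ i : Fin m, (r i.castSucc - r (Fin.last m)) * (k / (m + 1)) := by
  have hm : (m : ℝ) + 1 ≠ 0 := by positivity
  rw [Fin.sum_univ_castSucc] at hr hκ ⊢
  rw [← Finset.sum_mul, Finset.sum_sub_distrib, eq_neg_of_add_eq_zero_left hr]
  simp only [sub_mul, Finset.sum_sub_distrib, ← Finset.mul_sum, Finset.sum_const,
    Finset.card_univ, Fintype.card_fin, nsmul_eq_mul]
  rw [eq_sub_of_add_eq hκ]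
  field_simp
  ring

theorem exists_balanced {m : ℕ} (c : Fin m → ℝ) :
    ∃ r : Fin (m + 1) → ℝ, ∑ i, r i = 0 ∧ ∀ i, r (Fin.castSucc i) - r (Fin.last m) = c i := by
  have hm : (m : ℝ) + 1 ≠ 0 := by positivity
  refine ⟨Fin.snoc (fun i => c i - (∑ j, c j) / (m + 1)) (-(∑ j, c j) / (m + 1)), ?_, ?_⟩
  · rw [Fin.sum_univ_castSucc]
    simp only [Fin.snoc_castSucc, Fin.snoc_last, Finset.sum_sub_distrib, Finset.sum_const,
      Finset.card_univ, Fintype.card_fin, nsmul_eq_mul]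
    field_simp
    ring
  · intro i
    simp only [Fin.snoc_castSucc, Fin.snoc_last]
    ring

theorem eq_zero_of_balanced {m : ℕ} (r : Fin (m + 1) → ℝ) (hr : ∑ i, r i = 0)
    (h : ∀ i : Fin m, r i.castSucc - r (Fin.last m) = 0) : r = 0 := by
  have hall : ∀ i, r i = r (Fin.last m) := fun i =>
    Fin.lastCases rfl (fun j => sub_eq_zero.1 (h j)) i
  have hlast : r (Fin.last m) = 0 := by
    rw [Finset.sum_congr rfl fun i _ => hall i] at hr
    simp only [Finset.sum_const, Finset.card_univ, Fintype.card_fin, nsmul_eq_mul] at hr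
    exact (mul_eq_zero.1 hr).resolve_left (by positivity)
  exact funext fun i => (hall i).trans hlast

/-- The linear functional on `ℝ^m × ℝ^n` with coefficients `c` and `d`. -/
noncomputable def coordFunctional {m n : ℕ} (c : Fin m → ℝ) (d : Fin n → ℝ) :
    ((Fin m → ℝ) × (Fin n → ℝ)) →L[ℝ] ℝ :=
  (∑ i, c i • (ContinuousLinearMap.proj i).comp (ContinuousLinearMap.fst ℝ _ _))
    + ∑ j, d j • (ContinuousLinearMap.proj j).comp (ContinuousLinearMap.snd ℝ _ _)

theorem coordFunctional_apply {m n : ℕ} (c : Fin m → ℝ) (d : Fin n → ℝ)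
    (p : (Fin m → ℝ) × (Fin n → ℝ)) :
    coordFunctional c d p = (∑ i, c i * p.1 i) + ∑ j, d j * p.2 j := by
  simp [coordFunctional]

theorem exists_eq_coordFunctional {m n : ℕ} (f : ((Fin m → ℝ) × (Fin n → ℝ)) →L[ℝ] ℝ) :
    ∃ c d, f = coordFunctional c d := by
  refine ⟨fun i => f (fun j => if i = j then 1 else 0, 0),
    fun i => f (0, fun j => if i = j then 1 else 0), ?_⟩
  ext x
  · simpa [coordFunctional_apply, mul_comm] using
      (f.toLinearMap ∘ₗ LinearMap.inl ℝ _ _).pi_apply_eq_sum_univ x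
  · simpa [coordFunctional_apply, mul_comm] using
      (f.toLinearMap ∘ₗ LinearMap.inr ℝ _ _).pi_apply_eq_sum_univ x

theorem coordFunctional_eq_zero {m n : ℕ} {c : Fin m → ℝ} {d : Fin n → ℝ}
    (h : coordFunctional c d = 0) : c = 0 ∧ d = 0 := by
  constructor <;> funext i
  · simpa [coordFunctional_apply, Pi.single_apply] using
      congrArg (fun g => g (Pi.single i 1, 0)) h
  · simpa [coordFunctional_apply, Pi.single_apply] using
      congrArg (fun g => g (0, Pi.single i 1)) h

/-- A real weight on finitely many coordinates `ι` satisfying a homogeneous system of rational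
linear equations (indexed by `A`) and finitely many rational linear inequalities (indexed by `B`)
can be replaced by an integral one, keeping it nonzero. -/
theorem exists_int_weight {ι : Type*} [Fintype ι] (A B : Set (ι → ℤ)) (hB : B.Finite)
    (x : ι → ℝ) (hx : x ≠ 0) (hA : ∀ v ∈ A, ∑ i, x i * v i = 0)
    (hxB : ∀ v ∈ B, 0 ≤ ∑ i, x i * v i) :
    ∃ z : ι → ℤ, z ≠ 0 ∧ (∀ v ∈ A, ∑ i, z i * v i = 0) ∧ ∀ v ∈ B, 0 ≤ ∑ i, z i * v i := by
  obtain ⟨ψ, hψ⟩ := exists_rat_linear_pos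
    (((hB.image fun v => ∑ i, x i * (v i : ℝ)).union (Set.finite_range x)).union
      (Set.finite_range (-x)))
  have hlin : ∀ v : ι → ℤ, ψ (∑ i, x i * v i) = ∑ i, ψ (x i) * v i := by
    intro v
    rw [map_sum]
    refine Finset.sum_congr rfl fun i _ => ?_
    rw [mul_comm, ← zsmul_eq_mul, map_zsmul, zsmul_eq_mul, mul_comm]
  obtain ⟨i₀, hi₀⟩ := Function.ne_iff.1 hx
  have hψ0 : ψ (x i₀) ≠ 0 := by
    rcases lt_or_gt_of_ne hi₀ with hlt | hgt
    · have h := hψ (-x i₀) (Or.inr ⟨i₀, rfl⟩) (neg_pos.2 hlt)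
      rw [map_neg] at h
      exact (neg_pos.1 h).ne
    · exact (hψ (x i₀) (Or.inl (Or.inr ⟨i₀, rfl⟩)) hgt).ne'
  -- The product of all denominators scales every `ψ (x i)` to an integer.
  obtain ⟨D, hD, z, hz⟩ : ∃ D : ℚ, 0 < D ∧ ∃ z : ι → ℤ, ∀ i, (z i : ℚ) = D * ψ (x i) := by
    refine ⟨∏ i, ((ψ (x i)).den : ℚ), Finset.prod_pos fun i _ => by
      exact_mod_cast (ψ (x i)).den_pos, ?_⟩
    classical
    refine ⟨fun i => (∏ j ∈ Finset.univ.erase i, ((ψ (x j)).den : ℤ)) * (ψ (x i)).num,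
      fun i => ?_⟩
    rw [← Finset.prod_erase_mul _ _ (Finset.mem_univ i), mul_assoc, Rat.den_mul_eq_num]
    push_cast
    rfl
  have hsum : ∀ v : ι → ℤ, ((∑ i, z i * v i : ℤ) : ℚ) = D * ψ (∑ i, x i * v i) := by
    intro v
    rw [hlin, Finset.mul_sum]
    push_cast
    exact Finset.sum_congr rfl fun i _ => by rw [hz, mul_assoc]
  refine ⟨z, fun h0 => ?_, fun v hv => ?_, fun v hv => ?_⟩
  · have h := hz i₀
    rw [h0] at h
    simp [hD.ne', hψ0] at h
  · have h := hsum v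
    rw [hA v hv, map_zero, mul_zero] at h
    exact_mod_cast h
  · have h : (0 : ℚ) ≤ D * ψ (∑ i, x i * v i) := by
      refine mul_nonneg hD.le ?_
      rcases (hxB v hv).eq_or_lt with h0 | hpos
      · rw [← h0, map_zero]
      · exact (hψ _ (Or.inl (Or.inl ⟨v, hv, rfl⟩)) hpos).le
    rw [← hsum] at h
    exact_mod_cast h

/-- Combinatorial Centroid Criterion, stable case (Theorem 3.9, torus form).
The centroid `O_{k,l}` lies in the interior of the convex hull of `ξ(S)` iff there
is no nonzero integral weight vector `λ = (r,s)` with coordinate sums zero such that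
`⟨I,λ⟩ ≥ 0` for all `I ∈ S`. -/
theorem centroid_criterion_stable
    (m n k l : ℕ) (hm : 1 ≤ m) (hn : 1 ≤ n) (hk : 1 ≤ k) (hl : 1 ≤ l)
    (S : Set ((Fin (m + 1) → ℕ) × (Fin (n + 1) → ℕ)))
    (hSne : S.Nonempty)
    (hS : ∀ I ∈ S, (∑ i, I.1 i) = k ∧ (∑ j, I.2 j) = l) :
    (((fun _ : Fin m => (k : ℝ) / (m + 1), fun _ : Fin n => (l : ℝ) / (n + 1)) :
        (Fin m → ℝ) × (Fin n → ℝ)) ∈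
      interior (convexHull ℝ
        ((fun I : (Fin (m + 1) → ℕ) × (Fin (n + 1) → ℕ) =>
            ((fun i : Fin m => (I.1 i.castSucc : ℝ)),
             (fun j : Fin n => (I.2 j.castSucc : ℝ)))) '' S))) ↔
    ¬ ∃ (r : Fin (m + 1) → ℤ) (s : Fin (n + 1) → ℤ),
        (r, s) ≠ (0, 0) ∧
        (∑ i, r i) = 0 ∧ (∑ j, s j) = 0 ∧
        ∀ I ∈ S, 0 ≤ (∑ i, r i * (I.1 i : ℤ)) + ∑ j, s j * (I.2 j : ℤ) := by
  have hpair : ∀ (r : Fin (m + 1) → ℝ) (s : Fin (n + 1) → ℝ), ∑ i, r i = 0 → ∑ j, s j = 0 →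
      ∀ I ∈ S, (∑ i, r i * (I.1 i : ℝ)) + ∑ j, s j * (I.2 j : ℝ) =
        coordFunctional (fun i => r (Fin.castSucc i) - r (Fin.last m))
            (fun j => s (Fin.castSucc j) - s (Fin.last n))
            (fun i => (I.1 i.castSucc : ℝ), fun j => (I.2 j.castSucc : ℝ))
          - coordFunctional (fun i => r (Fin.castSucc i) - r (Fin.last m))
            (fun j => s (Fin.castSucc j) - s (Fin.last n))
            (fun _ => (k : ℝ) / (m + 1), fun _ => (l : ℝ) / (n + 1)) := by
    intro r s hr hs I hI
    rw [sum_mul_eq_sum_slopes r (fun i => (I.1 i : ℝ)) k hr (by exact_mod_cast (hS I hI).1),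
      sum_mul_eq_sum_slopes s (fun j => (I.2 j : ℝ)) l hs (by exact_mod_cast (hS I hI).2),
      coordFunctional_apply, coordFunctional_apply]
    ring
  rw [mem_interior_convexHull_iff (hSne.image _), not_iff_not]
  constructor
  · rintro ⟨f, hf, hfS⟩
    obtain ⟨c, d, rfl⟩ := exists_eq_coordFunctional f
    obtain ⟨r, hr, hrc⟩ := exists_balanced c
    obtain ⟨s, hs, hsd⟩ := exists_balanced d
    have hSfin : S.Finite := by
      refine ((Set.finite_Iic fun _ => k).prod (Set.finite_Iic fun _ => l)).subset fun I hI => ?_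
      refine ⟨fun i => ?_, fun j => ?_⟩
      · exact (Finset.single_le_sum (fun _ _ => Nat.zero_le _) (Finset.mem_univ i)).trans
          (hS I hI).1.le
      · exact (Finset.single_le_sum (fun _ _ => Nat.zero_le _) (Finset.mem_univ j)).trans
          (hS I hI).2.le
    obtain ⟨z, hz, hzA, hzB⟩ := exists_int_weight (ι := Fin (m + 1) ⊕ Fin (n + 1))
      {Sum.elim (fun _ => 1) (fun _ => 0), Sum.elim (fun _ => 0) (fun _ => 1)}
      ((fun I => Sum.elim (fun i => (I.1 i : ℤ)) fun j => (I.2 j : ℤ)) '' S) (hSfin.image _)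
      (Sum.elim r s)
      (by
        intro h0
        apply hf
        have hr0 : ∀ i, r i = 0 := fun i => congrFun h0 (Sum.inl i)
        have hs0 : ∀ j, s j = 0 := fun j => congrFun h0 (Sum.inr j)
        ext i
        · simp [coordFunctional_apply, ← hrc, hr0]
        · simp [coordFunctional_apply, ← hsd, hs0])
      (by
        rintro v (rfl | rfl)
        · simpa using hr
        · simpa using hs)
      (by
        rintro _ ⟨I, hI, rfl⟩
        have h := hfS _ ⟨I, hI, rfl⟩
        have h' := hpair r s hr hs I hI
        simp only [hrc, hsd] at h'
        simp only [Fintype.sum_sum_type, Sum.elim_inl, Sum.elim_inr, Int.cast_natCast]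
        rw [h']
        exact sub_nonneg.2 h)
    refine ⟨fun i => z (Sum.inl i), fun j => z (Sum.inr j), fun h0 => hz ?_, ?_, ?_, ?_⟩
    · rw [Prod.mk.injEq] at h0
      funext t
      rcases t with i | j
      · exact congrFun h0.1 i
      · exact congrFun h0.2 j
    · simpa using hzA _ (Or.inl rfl)
    · simpa using hzA _ (Or.inr rfl)
    · intro I hI
      simpa using hzB _ ⟨I, hI, rfl⟩
  · rintro ⟨r, s, hne, hr, hs, hrs⟩
    have hr' : ∑ i, (r i : ℝ) = 0 := by exact_mod_cast hr
    have hs' : ∑ j, (s j : ℝ) = 0 := by exact_mod_cast hs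
    refine ⟨coordFunctional (fun i => (r (Fin.castSucc i) : ℝ) - r (Fin.last m))
      (fun j => (s (Fin.castSucc j) : ℝ) - s (Fin.last n)), fun h0 => hne ?_, ?_⟩
    · obtain ⟨hc, hd⟩ := coordFunctional_eq_zero h0
      have hr0 := eq_zero_of_balanced (fun i => (r i : ℝ)) hr' (congrFun hc)
      have hs0 := eq_zero_of_balanced (fun j => (s j : ℝ)) hs' (congrFun hd)
      rw [Prod.mk.injEq]
      exact ⟨funext fun i => Int.cast_eq_zero.1 (congrFun hr0 i),
        funext fun j => Int.cast_eq_zero.1 (congrFun hs0 j)⟩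
    · rintro _ ⟨I, hI, rfl⟩
      have h : (0 : ℝ) ≤ (∑ i, (r i : ℝ) * (I.1 i : ℝ)) + ∑ j, (s j : ℝ) * (I.2 j : ℝ) := by
        exact_mod_cast hrs I hI
      rw [hpair (fun i => (r i : ℝ)) (fun j => (s j : ℝ)) hr' hs' I hI] at h
      exact sub_nonneg.1 h
end

section
/- (Finite fundamental set suffices for non-stability; Theorems 3.2 and 3.5, torus form.) For every nonempty subset S ⊆ Ξ_{k,l}, the following are equivalent: (i) there exists a normalised weight vector λ ∈ ℚ^{m+n+2} with ⟨I,λ⟩ ≥ 0 for all I ∈ S; (ii) there exists a fundamental solution (ρ,σ) ∈ ℚ^{m+n+2} with ⟨I,(ρ,σ)⟩ ≥ 0 for all I ∈ S (equivalently, S is contained in the semi-destabilised set N^⊕((ρ,σ)) = {I ∈ Ξ_{k,l} : ⟨I,(ρ,σ)⟩ ≥ 0}). -/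
/-!
Call a *weight* a vector whose two blocks of coordinates both have sum zero; weights form a space
of dimension `m + n`, on which each `e ∈ EqSet` acts as a linear functional.

Let `L` be a normalised weight that is nonnegative on `S`, and let `D` be the cone of all weights on
which every `e ∈ EqSet` with `⟨e, L⟩ ≥ 0` is nonnegative, so `L ∈ D`. Two families of elements of
`EqSet` matter.

* The differences of two coordinates in the same block lie in `EqSet` because `k, l ≥ 1`. Hence all
  weights in `D` have non-increasing blocks, and `x ↦ x.1 0 + x.2 0` is positive on `D \ {0}`.
* The difference of two monomials of bidegree `(k, l)` lies in `EqSet`. Hence a monomial `I₀ ∈ S` of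
  least `L`-weight has least `x`-weight in `S` for every `x ∈ D`, so a weight `x ∈ D` is nonnegative
  on all of `S` as soon as `⟨I₀, x⟩ ≥ 0`.

A pointed polyhedral cone is generated by its extremal rays and `⟨I₀, L⟩ ≥ 0`, so some extremal ray
of `D` satisfies `⟨I₀, x⟩ ≥ 0` (`exists_extremal`). The functionals vanishing on an extremal ray
cut it out, so `m + n - 1` of them suffice (`exists_family_cutting_line`), and rescaling a generator
of the ray gives a fundamental solution.
-/

open Finset

/-- The finite set `Eq_{m,n}^{k,l}` of integer vectors `(w,v)` with `|w_i| ≤ k`,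
`∑ w_i = 0`, `|v_j| ≤ l`, `∑ v_j = 0`. -/
def EqSet (m n k l : ℕ) : Set ((Fin (m + 1) → ℤ) × (Fin (n + 1) → ℤ)) :=
  {e | (∀ i, -(k : ℤ) ≤ e.1 i ∧ e.1 i ≤ (k : ℤ)) ∧ (∑ i, e.1 i) = 0 ∧
       (∀ j, -(l : ℤ) ≤ e.2 j ∧ e.2 j ≤ (l : ℤ)) ∧ (∑ j, e.2 j) = 0}

/-- `x` solves the linear system given by the `m + n - 1` equations `e t`, the two
sum-zero conditions, and the normalisation `x.1 0 = 1` (if `first`) or `x.2 0 = 1`. -/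
def SolvesSystem (m n : ℕ)
    (e : Fin (m + n - 1) → ((Fin (m + 1) → ℤ) × (Fin (n + 1) → ℤ)))
    (first : Bool)
    (x : (Fin (m + 1) → ℚ) × (Fin (n + 1) → ℚ)) : Prop :=
  (∀ t, (∑ i, ((e t).1 i : ℚ) * x.1 i) + (∑ j, ((e t).2 j : ℚ) * x.2 j) = 0) ∧
  (∑ i, x.1 i) = 0 ∧ (∑ j, x.2 j) = 0 ∧
  (if first then x.1 0 = 1 else x.2 0 = 1)

/-- `(ρ,σ)` is a fundamental solution: non-increasing entries, coordinate sums zero,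
`ρ_0 = 1` or `σ_0 = 1`, and `(ρ,σ)` is the unique solution of a consistent linear
system of `m + n - 1` equations chosen from `Eq_{m,n}^{k,l}` together with the
sum-zero and normalisation conditions. -/
def IsFundamentalSolution (m n k l : ℕ)
    (ρ : Fin (m + 1) → ℚ) (σ : Fin (n + 1) → ℚ) : Prop :=
  (∀ i j : Fin (m + 1), i ≤ j → ρ j ≤ ρ i) ∧
  (∀ i j : Fin (n + 1), i ≤ j → σ j ≤ σ i) ∧
  (∑ i, ρ i) = 0 ∧ (∑ j, σ j) = 0 ∧
  (ρ 0 = 1 ∨ σ 0 = 1) ∧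
  ∃ (e : Fin (m + n - 1) → ((Fin (m + 1) → ℤ) × (Fin (n + 1) → ℤ))) (first : Bool),
    (∀ t, e t ∈ EqSet m n k l) ∧
    ∀ x, SolvesSystem m n e first x ↔ x = (ρ, σ)

/-! ### Extremal rays of pointed polyhedral cones -/

/-- A cone cut out by finitely many functionals `f i ≥ 0` and pointed in the sense that `h` is
positive on its nonzero vectors has, in each half-space `φ ≥ 0` meeting it outside `0`, a vector
which spans the common kernel of the `f i` vanishing at it. -/
lemma exists_extremal {W ι : Type*} [AddCommGroup W] [Module ℚ W] [Fintype ι]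
    (f : ι → W →ₗ[ℚ] ℚ) (h φ : W →ₗ[ℚ] ℚ)
    (hpt : ∀ x, (∀ i, 0 ≤ f i x) → h x ≤ 0 → x = 0)
    (x₀ : W) (hx₀ : x₀ ≠ 0) (hf : ∀ i, 0 ≤ f i x₀) (hφ : 0 ≤ φ x₀) :
    ∃ x, x ≠ 0 ∧ (∀ i, 0 ≤ f i x) ∧ 0 ≤ φ x ∧
      ∀ y, (∀ i, f i x = 0 → f i y = 0) → ∃ c : ℚ, y = c • x := by
  classical
  -- Induction on the number of nonvanishing functionals, which drops until the conclusion holds.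
  induction hN : (univ.filter fun i => f i x₀ ≠ 0).card using Nat.strong_induction_on
    generalizing x₀ with
  | _ N ih =>
  by_cases hy : ∀ y, (∀ i, f i x₀ = 0 → f i y = 0) → ∃ c : ℚ, y = c • x₀
  · exact ⟨x₀, hx₀, hf, hφ, hy⟩
  push Not at hy
  obtain ⟨y, hy0, hyc⟩ := hy
  have hx : 0 < h x₀ := by
    by_contra hc
    exact hx₀ (hpt x₀ hf (not_lt.1 hc))
  -- A direction tangent to all vanishing functionals, in the kernel of `h`, with `φ ≥ 0`.
  obtain ⟨z, hz, hz0, hzh, hzφ⟩ : ∃ z : W, z ≠ 0 ∧ (∀ i, f i x₀ = 0 → f i z = 0) ∧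
      h z = 0 ∧ 0 ≤ φ z := by
    have hne : y - (h y / h x₀) • x₀ ≠ 0 := fun hc => hyc _ (sub_eq_zero.1 hc)
    have hk : ∀ i, f i x₀ = 0 → f i (y - (h y / h x₀) • x₀) = 0 := fun i hi => by
      simp [hi, hy0 i hi]
    have hh : h (y - (h y / h x₀) • x₀) = 0 := by
      simp [div_mul_cancel₀ _ hx.ne']
    rcases le_total 0 (φ (y - (h y / h x₀) • x₀)) with hp | hp
    · exact ⟨_, hne, hk, hh, hp⟩
    · refine ⟨-(y - (h y / h x₀) • x₀), neg_ne_zero.2 hne, fun i hi => ?_, ?_, ?_⟩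
      · rw [map_neg, hk i hi, neg_zero]
      · rw [map_neg, hh, neg_zero]
      · rw [map_neg]; linarith
  have hneg : (univ.filter fun i => f i z < 0).Nonempty := by
    by_contra hc
    rw [Finset.not_nonempty_iff_eq_empty, Finset.filter_eq_empty_iff] at hc
    exact hz (hpt z (fun i => not_lt.1 (hc (mem_univ i))) hzh.le)
  -- Move from `x₀` in the direction `z` up to the first wall.
  obtain ⟨j, hj, hjmin⟩ := Finset.exists_min_image _ (fun i => f i x₀ / (-f i z)) hneg
  have hjz : f j z < 0 := (Finset.mem_filter.1 hj).2
  set t := f j x₀ / (-f j z) with ht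
  have ht0 : 0 ≤ t := div_nonneg (hf j) (by linarith)
  have htj : f j (x₀ + t • z) = 0 := by
    have hzj : -f j z ≠ 0 := by linarith
    have : t * (-f j z) = f j x₀ := div_mul_cancel₀ _ hzj
    simp only [map_add, map_smul, smul_eq_mul]
    linarith
  have hnext : h (x₀ + t • z) = h x₀ := by simp [hzh]
  refine ih _ ?_ (x₀ + t • z) ?_ ?_ ?_ rfl
  · rw [← hN]
    apply Finset.card_lt_card
    rw [Finset.ssubset_iff_of_subset]
    · refine ⟨j, ?_, ?_⟩
      · simp only [mem_filter, mem_univ, true_and]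
        exact fun hc => hjz.ne (hz0 j hc)
      · rw [mem_filter]
        exact fun hc => hc.2 htj
    · intro i
      simp only [mem_filter, mem_univ, true_and]
      intro hi hc
      exact hi (by simp [hc, hz0 i hc])
  · intro hc
    rw [hc, map_zero] at hnext
    exact hx.ne hnext
  · intro i
    simp only [map_add, map_smul, smul_eq_mul]
    rcases lt_or_ge (f i z) 0 with hi | hi
    · have := hjmin i (by simpa using hi)
      rw [le_div_iff₀ (by linarith)] at this
      linarith
    · have := mul_nonneg ht0 hi
      linarith [hf i]
  · simp only [map_add, map_smul, smul_eq_mul]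
    have := mul_nonneg ht0 hzφ
    linarith

/-- If the common kernel of a set of functionals on a space of dimension `d + 1` is a line, then
`d` of them already have that kernel. -/
lemma exists_family_cutting_line {W : Type*} [AddCommGroup W] [Module ℚ W]
    [FiniteDimensional ℚ W] (A : Set (Module.Dual ℚ W)) (x : W) (hx : x ≠ 0)
    (hA : ∀ a ∈ A, a x = 0) (hline : ∀ y, (∀ a ∈ A, a y = 0) → ∃ c : ℚ, y = c • x)
    (d : ℕ) (hd : Module.finrank ℚ W = d + 1) :
    ∃ g : Fin d → Module.Dual ℚ W, (∀ t, g t ∈ A) ∧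
      ∀ y, (∀ t, g t y = 0) → ∃ c : ℚ, y = c • x := by
  have hco : (Submodule.span ℚ A).dualCoannihilator = Submodule.span ℚ {x} := by
    ext y
    rw [Submodule.mem_dualCoannihilator, Submodule.mem_span_singleton]
    constructor
    · intro hy
      obtain ⟨c, hc⟩ := hline y fun a ha => hy a (Submodule.subset_span ha)
      exact ⟨c, hc.symm⟩
    · rintro ⟨c, rfl⟩ a ha
      induction ha using Submodule.span_induction with
      | mem a ha => simp [hA a ha]
      | zero => simp
      | add a b _ _ h1 h2 => rw [LinearMap.add_apply, h1, h2, add_zero]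
      | smul q a _ h1 => rw [LinearMap.smul_apply, h1, smul_zero]
  have hrank := Subspace.finrank_add_finrank_dualCoannihilator_eq (Submodule.span ℚ A)
  rw [hco, finrank_span_singleton hx, hd] at hrank
  obtain ⟨g, hgA, hgs, -⟩ := Submodule.exists_fun_fin_finrank_span_eq ℚ A
  have hcard : Module.finrank ℚ (Submodule.span ℚ A) = d := by omega
  refine ⟨g ∘ Fin.cast hcard.symm, fun t => hgA _, fun y hy => hline y fun a ha => ?_⟩
  have hle : Submodule.span ℚ (Set.range g) ≤ LinearMap.ker (Module.Dual.eval ℚ W y) := by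
    rw [Submodule.span_le]
    rintro _ ⟨t, rfl⟩
    exact hy (Fin.cast hcard t)
  rw [hgs] at hle
  exact hle (Submodule.subset_span ha)

/-! ### The space of weights and the functionals of `EqSet` -/

/-- The sums of the two blocks of coordinates. -/
def blockSums (m n : ℕ) : ((Fin (m + 1) → ℚ) × (Fin (n + 1) → ℚ)) →ₗ[ℚ] ℚ × ℚ where
  toFun x := (∑ i, x.1 i, ∑ j, x.2 j)
  map_add' x y := by simp [Finset.sum_add_distrib]
  map_smul' c x := by simp [Finset.mul_sum]

/-- The space of weights: vectors whose two blocks have sum zero. -/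
abbrev Weights (m n : ℕ) : Submodule ℚ ((Fin (m + 1) → ℚ) × (Fin (n + 1) → ℚ)) :=
  LinearMap.ker (blockSums m n)

lemma finrank_weights (m n : ℕ) : Module.finrank ℚ (Weights m n) = m + n := by
  have hsurj : LinearMap.range (blockSums m n) = ⊤ := by
    rw [LinearMap.range_eq_top]
    rintro ⟨a, b⟩
    exact ⟨(Pi.single 0 a, Pi.single 0 b), by simp [blockSums]⟩
  have h := LinearMap.finrank_range_add_finrank_ker (blockSums m n)
  rw [hsurj, finrank_top] at h
  simp only [Module.finrank_prod, Module.finrank_self, Module.finrank_fin_fun] at h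
  change _ + Module.finrank ℚ (Weights m n) = _ at h
  omega

/-- The pairing `⟨e, ·⟩` with a fixed integer vector `e`, on all pairs of blocks and not only on
weights. -/
def pairing (m n : ℕ) (e : (Fin (m + 1) → ℤ) × (Fin (n + 1) → ℤ)) :
    ((Fin (m + 1) → ℚ) × (Fin (n + 1) → ℚ)) →ₗ[ℚ] ℚ where
  toFun x := (∑ i, (e.1 i : ℚ) * x.1 i) + ∑ j, (e.2 j : ℚ) * x.2 j
  map_add' x y := by
    simp only [Prod.fst_add, Prod.snd_add, Pi.add_apply, mul_add, Finset.sum_add_distrib]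
    ring
  map_smul' c x := by
    simp only [Prod.smul_fst, Prod.smul_snd, Pi.smul_apply, smul_eq_mul, mul_add, Finset.mul_sum,
      RingHom.id_apply]
    congr 1 <;> exact Finset.sum_congr rfl fun i _ => by ring

lemma pairing_apply (m n : ℕ) (e : (Fin (m + 1) → ℤ) × (Fin (n + 1) → ℤ))
    (x : (Fin (m + 1) → ℚ) × (Fin (n + 1) → ℚ)) :
    pairing m n e x = (∑ i, (e.1 i : ℚ) * x.1 i) + ∑ j, (e.2 j : ℚ) * x.2 j := rfl

lemma finite_eqSet (m n k l : ℕ) : (EqSet m n k l).Finite :=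
  ((Set.finite_Icc (fun _ => -(k : ℤ)) fun _ => (k : ℤ)).prod
      (Set.finite_Icc (fun _ => -(l : ℤ)) fun _ => (l : ℤ))).subset
    fun _ he => ⟨⟨fun i => (he.1 i).1, fun i => (he.1 i).2⟩,
      ⟨fun j => (he.2.2.1 j).1, fun j => (he.2.2.1 j).2⟩⟩

lemma eqSet_fst {m n k l : ℕ} (hk : 1 ≤ k) (i j : Fin (m + 1)) :
    (Pi.single i 1 - Pi.single j 1, 0) ∈ EqSet m n k l := by
  refine ⟨fun a => ?_, ?_, fun a => ?_, ?_⟩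
  · simp only [Pi.sub_apply, Pi.single_apply]
    split_ifs <;> omega
  · simp [Finset.sum_sub_distrib]
  · simp
  · simp

lemma eqSet_snd {m n k l : ℕ} (hl : 1 ≤ l) (i j : Fin (n + 1)) :
    (0, Pi.single i 1 - Pi.single j 1) ∈ EqSet m n k l := by
  refine ⟨fun a => ?_, ?_, fun a => ?_, ?_⟩
  · simp
  · simp
  · simp only [Pi.sub_apply, Pi.single_apply]
    split_ifs <;> omega
  · simp [Finset.sum_sub_distrib]

lemma pairing_fst {m n : ℕ} (i j : Fin (m + 1)) (x : (Fin (m + 1) → ℚ) × (Fin (n + 1) → ℚ)) :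
    pairing m n (Pi.single i 1 - Pi.single j 1, 0) x = x.1 i - x.1 j := by
  simp [pairing_apply, Pi.single_apply, sub_mul, Finset.sum_sub_distrib]

lemma pairing_snd {m n : ℕ} (i j : Fin (n + 1)) (x : (Fin (m + 1) → ℚ) × (Fin (n + 1) → ℚ)) :
    pairing m n (0, Pi.single i 1 - Pi.single j 1) x = x.2 i - x.2 j := by
  simp [pairing_apply, Pi.single_apply, sub_mul, Finset.sum_sub_distrib]

lemma head_nonneg {p : ℕ} (r : Fin (p + 1) → ℚ) (hr : ∀ i j, i ≤ j → r j ≤ r i)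
    (hs : ∑ i, r i = 0) : 0 ≤ r 0 := by
  by_contra hc
  have : ∑ i, r i < ∑ i : Fin (p + 1), (0 : ℚ) :=
    Finset.sum_lt_sum_of_nonempty univ_nonempty fun i _ =>
      (hr 0 i (Fin.zero_le i)).trans_lt (not_le.1 hc)
  simp [hs] at this

lemma eq_zero_of_head {p : ℕ} (r : Fin (p + 1) → ℚ) (hr : ∀ i j, i ≤ j → r j ≤ r i)
    (hs : ∑ i, r i = 0) (h0 : r 0 = 0) : r = 0 := by
  have := (Finset.sum_eq_zero_iff_of_nonpos fun i _ => h0 ▸ hr 0 i (Fin.zero_le i)).1 hs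
  exact funext fun i => this i (mem_univ i)

/-! ### Differences of monomials -/

/-- A monomial exponent vector, seen as an integer vector. -/
def toInt {m n : ℕ} (I : (Fin (m + 1) → ℕ) × (Fin (n + 1) → ℕ)) :
    (Fin (m + 1) → ℤ) × (Fin (n + 1) → ℤ) := (fun i => (I.1 i : ℤ), fun j => (I.2 j : ℤ))

lemma pairing_toInt {m n : ℕ} (I : (Fin (m + 1) → ℕ) × (Fin (n + 1) → ℕ))
    (x : (Fin (m + 1) → ℚ) × (Fin (n + 1) → ℚ)) :
    pairing m n (toInt I) x = (∑ i, x.1 i * (I.1 i : ℚ)) + ∑ j, x.2 j * (I.2 j : ℚ) := by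
  simp [pairing_apply, toInt, mul_comm]

lemma pairing_sub {m n : ℕ} (e e' : (Fin (m + 1) → ℤ) × (Fin (n + 1) → ℤ))
    (x : (Fin (m + 1) → ℚ) × (Fin (n + 1) → ℚ)) :
    pairing m n (e - e') x = pairing m n e x - pairing m n e' x := by
  simp only [pairing_apply, Prod.fst_sub, Prod.snd_sub, Pi.sub_apply, Int.cast_sub, sub_mul,
    Finset.sum_sub_distrib]
  ring

lemma toInt_sub_mem {m n k l : ℕ} (I J : (Fin (m + 1) → ℕ) × (Fin (n + 1) → ℕ))
    (hI : (∑ i, I.1 i) = k ∧ (∑ j, I.2 j) = l) (hJ : (∑ i, J.1 i) = k ∧ (∑ j, J.2 j) = l) :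
    toInt I - toInt J ∈ EqSet m n k l := by
  have le1 : ∀ {p q : ℕ} (f : Fin p → ℕ), ∑ i, f i = q → ∀ i, f i ≤ q := fun f hf i =>
    hf ▸ Finset.single_le_sum (fun _ _ => Nat.zero_le _) (mem_univ i)
  refine ⟨fun i => ?_, ?_, fun j => ?_, ?_⟩
  · have := le1 _ hI.1 i
    have := le1 _ hJ.1 i
    simp only [toInt, Prod.fst_sub, Pi.sub_apply]
    omega
  · simp only [toInt, Prod.fst_sub, Pi.sub_apply, Finset.sum_sub_distrib, ← Nat.cast_sum, hI.1,
      hJ.1, sub_self]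
  · have := le1 _ hI.2 j
    have := le1 _ hJ.2 j
    simp only [toInt, Prod.snd_sub, Pi.sub_apply]
    omega
  · simp only [toInt, Prod.snd_sub, Pi.sub_apply, Finset.sum_sub_distrib, ← Nat.cast_sum, hI.2,
      hJ.2, sub_self]

lemma finite_monomials {m n k l : ℕ} (S : Set ((Fin (m + 1) → ℕ) × (Fin (n + 1) → ℕ)))
    (hS : ∀ I ∈ S, (∑ i, I.1 i) = k ∧ (∑ j, I.2 j) = l) : S.Finite :=
  ((Set.finite_Icc (fun _ => 0) fun _ => k).prod
      (Set.finite_Icc (fun _ => 0) fun _ => l)).subset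
    fun I hI =>
      ⟨⟨fun _ => Nat.zero_le _, fun i => (hS I hI).1 ▸
          Finset.single_le_sum (fun _ _ => Nat.zero_le _) (mem_univ i)⟩,
        ⟨fun _ => Nat.zero_le _, fun j => (hS I hI).2 ▸
          Finset.single_le_sum (fun _ _ => Nat.zero_le _) (mem_univ j)⟩⟩

/-! ### Fundamental solutions from extremal rays -/

/-- A weight normalised by `x.1 0 = 1` or `x.2 0 = 1` and spanning the common zero line of
`m + n - 1` equations in the space of weights is a fundamental solution. -/
lemma isFundamentalSolution_of_line {m n k l : ℕ} (x : (Fin (m + 1) → ℚ) × (Fin (n + 1) → ℚ))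
    (h1 : ∀ i j, i ≤ j → x.1 j ≤ x.1 i) (h2 : ∀ i j, i ≤ j → x.2 j ≤ x.2 i)
    (s1 : ∑ i, x.1 i = 0) (s2 : ∑ j, x.2 j = 0) (first : Bool)
    (hx : if first then x.1 0 = 1 else x.2 0 = 1)
    (e : Fin (m + n - 1) → ((Fin (m + 1) → ℤ) × (Fin (n + 1) → ℤ)))
    (he : ∀ t, e t ∈ EqSet m n k l) (hex : ∀ t, pairing m n (e t) x = 0)
    (hline : ∀ y, (∑ i, y.1 i = 0) → (∑ j, y.2 j = 0) → (∀ t, pairing m n (e t) y = 0) →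
      ∃ c : ℚ, y = c • x) :
    IsFundamentalSolution m n k l x.1 x.2 := by
  refine ⟨h1, h2, s1, s2, ?_, e, first, he, fun y => ⟨?_, ?_⟩⟩
  · cases first
    · exact Or.inr (by simpa using hx)
    · exact Or.inl (by simpa using hx)
  · rintro ⟨hy, t1, t2, hn⟩
    obtain ⟨c, rfl⟩ := hline y t1 t2 hy
    have : c = 1 := by
      cases first <;> simp_all
    rw [this, one_smul]
  · rintro rfl
    exact ⟨hex, s1, s2, hx⟩

/-- Theorems 3.2 and 3.5 (torus form), non-stable case: a set of monomials `S` is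
semi-destabilised by some normalised weight vector iff it is semi-destabilised by a
fundamental solution. -/
theorem fundamental_set_suffices_nonstable
    (m n k l : ℕ) (hm : 1 ≤ m) (hn : 1 ≤ n) (hk : 1 ≤ k) (hl : 1 ≤ l)
    (S : Set ((Fin (m + 1) → ℕ) × (Fin (n + 1) → ℕ)))
    (hSne : S.Nonempty)
    (hS : ∀ I ∈ S, (∑ i, I.1 i) = k ∧ (∑ j, I.2 j) = l) :
    (∃ (r : Fin (m + 1) → ℚ) (s : Fin (n + 1) → ℚ),
        (r, s) ≠ (0, 0) ∧
        (∀ i j : Fin (m + 1), i ≤ j → r j ≤ r i) ∧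
        (∀ i j : Fin (n + 1), i ≤ j → s j ≤ s i) ∧
        (∑ i, r i) = 0 ∧ (∑ j, s j) = 0 ∧
        ∀ I ∈ S, 0 ≤ (∑ i, r i * (I.1 i : ℚ)) + ∑ j, s j * (I.2 j : ℚ)) ↔
    (∃ (ρ : Fin (m + 1) → ℚ) (σ : Fin (n + 1) → ℚ),
        IsFundamentalSolution m n k l ρ σ ∧
        ∀ I ∈ S, 0 ≤ (∑ i, ρ i * (I.1 i : ℚ)) + ∑ j, σ j * (I.2 j : ℚ)) := by
  constructor
  swap
  · rintro ⟨ρ, σ, ⟨h1, h2, s1, s2, h0, -⟩, hI⟩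
    refine ⟨ρ, σ, ?_, h1, h2, s1, s2, hI⟩
    intro hc
    obtain ⟨rfl, rfl⟩ := Prod.mk.inj hc
    simp at h0
  rintro ⟨r, s, hne, hr, hs, sr, ss, hI⟩
  have memW : ∀ x : (Fin (m + 1) → ℚ) × (Fin (n + 1) → ℚ),
      x ∈ Weights m n ↔ (∑ i, x.1 i = 0) ∧ (∑ j, x.2 j = 0) := fun x => by
    rw [LinearMap.mem_ker, blockSums, LinearMap.coe_mk, AddHom.coe_mk, Prod.mk_eq_zero]
  -- `L` is the given weight and `I₀` a monomial of `S` of least `L`-weight.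
  let L : Weights m n := ⟨(r, s), (memW _).2 ⟨sr, ss⟩⟩
  obtain ⟨I₀, hI₀, hmin⟩ := Set.exists_min_image S (fun I => pairing m n (toInt I) L)
    (finite_monomials S hS) hSne
  let ι := {e // e ∈ EqSet m n k l ∧ 0 ≤ pairing m n e L}
  have : Finite ι := ((finite_eqSet m n k l).subset fun e he => he.1).to_subtype
  let _ := Fintype.ofFinite ι
  let f : ι → Weights m n →ₗ[ℚ] ℚ := fun e => (pairing m n e.1).comp (Weights m n).subtype
  let φ : Weights m n →ₗ[ℚ] ℚ := (pairing m n (toInt I₀)).comp (Weights m n).subtype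
  let h : Weights m n →ₗ[ℚ] ℚ :=
    ((LinearMap.proj (0 : Fin (m + 1)) : (Fin (m + 1) → ℚ) →ₗ[ℚ] ℚ).comp (LinearMap.fst ℚ _ _) +
      (LinearMap.proj (0 : Fin (n + 1)) : (Fin (n + 1) → ℚ) →ₗ[ℚ] ℚ).comp
        (LinearMap.snd ℚ _ _)).comp (Weights m n).subtype
  have h_apply : ∀ x : Weights m n, h x = x.1.1 0 + x.1.2 0 := fun x => rfl
  have mono1 : ∀ x : Weights m n, (∀ e, 0 ≤ f e x) → ∀ i j, i ≤ j → x.1.1 j ≤ x.1.1 i := by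
    intro x hx i j hij
    have := hx ⟨_, eqSet_fst hk i j, by rw [pairing_fst]; exact sub_nonneg.2 (hr i j hij)⟩
    exact sub_nonneg.1 (this.trans_eq (pairing_fst i j x.1))
  have mono2 : ∀ x : Weights m n, (∀ e, 0 ≤ f e x) → ∀ i j, i ≤ j → x.1.2 j ≤ x.1.2 i := by
    intro x hx i j hij
    have := hx ⟨_, eqSet_snd hl i j, by rw [pairing_snd]; exact sub_nonneg.2 (hs i j hij)⟩
    exact sub_nonneg.1 (this.trans_eq (pairing_snd i j x.1))
  have hpt : ∀ x, (∀ e, 0 ≤ f e x) → h x ≤ 0 → x = 0 := by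
    intro x hx hh
    obtain ⟨t1, t2⟩ := (memW x.1).1 x.2
    have a1 := head_nonneg _ (mono1 x hx) t1
    have a2 := head_nonneg _ (mono2 x hx) t2
    rw [h_apply] at hh
    exact Subtype.ext (Prod.ext (eq_zero_of_head _ (mono1 x hx) t1 (by linarith))
      (eq_zero_of_head _ (mono2 x hx) t2 (by linarith)))
  obtain ⟨x, hx0, hxf, hxφ, hxl⟩ := exists_extremal f h φ hpt L
    (fun hc => hne (congrArg Subtype.val hc)) (fun e => e.2.2)
    ((hI I₀ hI₀).trans_eq (pairing_toInt I₀ (r, s)).symm)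
  -- `I₀` also has least weight for `x`.
  have hxS : ∀ I ∈ S, 0 ≤ pairing m n (toInt I) x.1 := by
    intro I hIS
    have h1 := hxf ⟨_, toInt_sub_mem I I₀ (hS I hIS) (hS I₀ hI₀), by
      rw [pairing_sub]; exact sub_nonneg.2 (hmin I hIS)⟩
    have h2 : 0 ≤ pairing m n (toInt I) x.1 - pairing m n (toInt I₀) x.1 :=
      h1.trans_eq (pairing_sub _ _ _)
    have h3 : 0 ≤ pairing m n (toInt I₀) x.1 := hxφ
    linarith
  obtain ⟨g, hgA, hgl⟩ := exists_family_cutting_line {a | ∃ e, f e = a ∧ f e x = 0} x hx0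
    (by rintro _ ⟨e, rfl, he⟩; exact he)
    (fun y hy => hxl y fun e he => hy _ ⟨e, rfl, he⟩) (m + n - 1)
    (by rw [finrank_weights]; omega)
  choose e heg hex using hgA
  obtain ⟨t1, t2⟩ := (memW x.1).1 x.2
  have a1 := head_nonneg _ (mono1 x hxf) t1
  have a2 := head_nonneg _ (mono2 x hxf) t2
  have hpos : 0 < h x := by
    by_contra hc
    exact hx0 (hpt x hxf (not_lt.1 hc))
  -- Rescale by the inverse of a positive leading coordinate.
  obtain ⟨first, c, hc, hcx⟩ : ∃ (first : Bool) (c : ℚ), 0 < c ∧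
      if first then (c • x.1).1 0 = 1 else (c • x.1).2 0 = 1 := by
    rw [h_apply] at hpos
    rcases a1.lt_or_eq with hlt | heq
    · exact ⟨true, (x.1.1 0)⁻¹, inv_pos.2 hlt, by simp [hlt.ne']⟩
    · have hlt : 0 < x.1.2 0 := by linarith
      exact ⟨false, (x.1.2 0)⁻¹, inv_pos.2 hlt, by simp [hlt.ne']⟩
  refine ⟨(c • x.1).1, (c • x.1).2, isFundamentalSolution_of_line (c • x.1) ?_ ?_ ?_ ?_ first hcx
    (fun t => (e t).1) (fun t => (e t).2.1) ?_ ?_, ?_⟩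
  · exact fun i j hij => mul_le_mul_of_nonneg_left (mono1 x hxf i j hij) hc.le
  · exact fun i j hij => mul_le_mul_of_nonneg_left (mono2 x hxf i j hij) hc.le
  · exact ((memW _).1 (c • x).2).1
  · exact ((memW _).1 (c • x).2).2
  · intro t
    rw [map_smul]
    exact (congrArg (c • ·) (hex t)).trans (smul_zero c)
  · intro y y1 y2 hy
    obtain ⟨b, hb⟩ := hgl ⟨y, (memW y).2 ⟨y1, y2⟩⟩ fun t => by rw [← heg t]; exact hy t
    refine ⟨b / c, ?_⟩
    rw [smul_smul, div_mul_cancel₀ _ hc.ne']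
    exact congrArg Subtype.val hb
  · intro I hIS
    rw [← pairing_toInt, map_smul]
    exact mul_nonneg hc.le (hxS I hIS)
end

section
/- (Singular locus of the GIT-polystable (1,2)-divisor; content of Proposition 5.7.) Let f = x₀·(y₁y₂ − y₀y₃) + x₁·(−y₁y₂ − y₀y₃) ∈ ℂ[x₀,x₁,y₀,y₁,y₂,y₃]. For (a,b) ∈ (ℂ² ∖ {0}) × (ℂ⁴ ∖ {0}), all six partial derivatives of f (with respect to x₀, x₁, y₀, y₁, y₂, y₃) vanish at (a,b) if and only if there exist nonzero scalars u, v ∈ ℂ such that (a,b) = (u·a′, v·b′) for one of the four pairs (a′,b′) ∈ { ((1,−1),(1,0,0,0)), ((1,1),(0,1,0,0)), ((1,1),(0,0,1,0)), ((1,−1),(0,0,0,1)) }. Consequently, the threefold X = {f = 0} ⊂ ℙ¹ × ℙ³ has exactly four singular points, namely P = ([1:−1],[1:0:0:0]), Q = ([1:1],[0:1:0:0]), R = ([1:1],[0:0:1:0]) and S = ([1:−1],[0:0:0:1]). -/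
/-! Up to the regrouping `f = (x₀ - x₁) y₁ y₂ - (x₀ + x₁) y₀ y₃`, the vanishing of the six partials
says `y₁ y₂ = y₀ y₃ = 0`, `(x₀ - x₁) y₁ = (x₀ - x₁) y₂ = 0` and `(x₀ + x₁) y₀ = (x₀ + x₁) y₃ = 0`
(`gradient_eq_zero_iff`). As `(x₀, x₁) ≠ 0`, the forms `x₀ - x₁` and `x₀ + x₁` do not both vanish.
If `x₀ = x₁`, then `y₀ = y₃ = 0` and exactly one of `y₁, y₂` is nonzero; if `x₀ ≠ x₁`, then
`y₁ = y₂ = 0`, so one of `y₀, y₃` is nonzero, which forces `x₀ = -x₁`, and `y₀ y₃ = 0` kills the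
other one. -/

open MvPolynomial

/-- The Jacobian equations of `f`, solved for the monomials `y₁ y₂`, `y₀ y₃` in the two equations
coming from `∂/∂x₀` and `∂/∂x₁`. -/
lemma gradient_eq_zero_iff (a : Fin 2 → ℂ) (b : Fin 4 → ℂ) :
    (∀ i : Fin 6, eval (Fin.append a b) (pderiv i
      (X 0 * (X 3 * X 4 - X 2 * X 5) + X 1 * (-(X 3 * X 4) - X 2 * X 5) :
        MvPolynomial (Fin 6) ℂ)) = 0) ↔
    b 1 * b 2 = 0 ∧ b 0 * b 3 = 0 ∧ (a 0 - a 1) * b 1 = 0 ∧ (a 0 - a 1) * b 2 = 0 ∧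
      (a 0 + a 1) * b 0 = 0 ∧ (a 0 + a 1) * b 3 = 0 := by
  have e0 : Fin.append a b 0 = a 0 := rfl
  have e1 : Fin.append a b 1 = a 1 := rfl
  have e2 : Fin.append a b 2 = b 0 := rfl
  have e3 : Fin.append a b 3 = b 1 := rfl
  have e4 : Fin.append a b 4 = b 2 := rfl
  have e5 : Fin.append a b 5 = b 3 := rfl
  simp only [Fin.forall_fin_succ, IsEmpty.forall_iff, and_true]
  simp [pderiv_X, e0, e1, e2, e3, e4, e5, -mul_eq_zero]
  constructor
  · rintro ⟨h0, h1, h2, h3, h4, h5⟩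
    refine ⟨?_, ?_, ?_, ?_, ?_, ?_⟩ <;> grind
  · rintro ⟨h0, h1, h2, h3, h4, h5⟩
    refine ⟨?_, ?_, ?_, ?_, ?_, ?_⟩ <;> grind

/-- Singular locus of the GIT-polystable `(1,2)`-divisor
`f = x₀(y₁y₂ - y₀y₃) + x₁(-y₁y₂ - y₀y₃)` (content of Proposition 5.7): the
singular points are exactly the four points `([1:-1],[1:0:0:0])`, `([1:1],[0:1:0:0])`,
`([1:1],[0:0:1:0])`, `([1:-1],[0:0:0:1])`.  Variables `0,1` of `Fin 6` are `x₀,x₁`;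
variables `2,3,4,5` are `y₀,y₁,y₂,y₃`. -/
theorem singular_locus_polystable_one_two_divisor
    (f : MvPolynomial (Fin 6) ℂ)
    (hf : f = X 0 * (X 3 * X 4 - X 2 * X 5) + X 1 * (-(X 3 * X 4) - X 2 * X 5))
    (a : Fin 2 → ℂ) (ha : a ≠ 0) (b : Fin 4 → ℂ) (hb : b ≠ 0) :
    (∀ i : Fin 6, eval (Fin.append a b) (pderiv i f) = 0) ↔
    ∃ u v : ℂ, u ≠ 0 ∧ v ≠ 0 ∧
      ((a = u • ![1, -1] ∧ b = v • ![1, 0, 0, 0]) ∨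
       (a = u • ![1, 1] ∧ b = v • ![0, 1, 0, 0]) ∨
       (a = u • ![1, 1] ∧ b = v • ![0, 0, 1, 0]) ∨
       (a = u • ![1, -1] ∧ b = v • ![0, 0, 0, 1])) := by
  subst hf
  rw [gradient_eq_zero_iff]
  constructor
  · rintro ⟨h12, h03, h1, h2, h0, h3⟩
    have ha' : ¬ (a 0 = 0 ∧ a 1 = 0) := fun h => ha (by ext i; fin_cases i <;> simp [h])
    have hb' : ¬ (b 0 = 0 ∧ b 1 = 0 ∧ b 2 = 0 ∧ b 3 = 0) :=
      fun h => hb (by ext i; fin_cases i <;> simp [h])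
    by_cases hx : a 0 = a 1
    · have hs : a 0 + a 1 ≠ 0 := by grind
      have b0 : b 0 = 0 := by simpa [hs] using h0
      have b3 : b 3 = 0 := by simpa [hs] using h3
      have hu : a 0 ≠ 0 := by grind
      have hA : a = a 0 • ![1, 1] := by ext i; fin_cases i <;> simp [hx]
      rcases mul_eq_zero.mp h12 with b1 | b2
      · exact ⟨a 0, b 2, hu, by grind, Or.inr (Or.inr (Or.inl
          ⟨hA, by ext i; fin_cases i <;> simp [b0, b1, b3]⟩))⟩
      · exact ⟨a 0, b 1, hu, by grind, Or.inr (Or.inl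
          ⟨hA, by ext i; fin_cases i <;> simp [b0, b2, b3]⟩)⟩
    · have hd : a 0 - a 1 ≠ 0 := sub_ne_zero.mpr hx
      have b1 : b 1 = 0 := by simpa [hd] using h1
      have b2 : b 2 = 0 := by simpa [hd] using h2
      have hs : a 1 = -a 0 := by grind
      have hu : a 0 ≠ 0 := by grind
      have hA : a = a 0 • ![1, -1] := by ext i; fin_cases i <;> simp [hs]
      rcases mul_eq_zero.mp h03 with b0 | b3
      · exact ⟨a 0, b 3, hu, by grind, Or.inr (Or.inr (Or.inr
          ⟨hA, by ext i; fin_cases i <;> simp [b0, b1, b2]⟩))⟩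
      · exact ⟨a 0, b 0, hu, by grind, Or.inl
          ⟨hA, by ext i; fin_cases i <;> simp [b1, b2, b3]⟩⟩
  · rintro ⟨u, v, -, -, ⟨rfl, rfl⟩ | ⟨rfl, rfl⟩ | ⟨rfl, rfl⟩ | ⟨rfl, rfl⟩⟩ <;> simp
end

section
/- (Singular locus of the maximally degenerate J_{2,0}-curve; from the analysis preceding Proposition 4.5.) Let F = X²Y²Z²W² + XY³Z⁴ + X³YW⁴ ∈ ℂ[X,Y,Z,W], so that F = XY·(XYZ²W² + Y²Z⁴ + X²W⁴). For (a,b,c,d) ∈ ℂ⁴ with (a,b) ≠ (0,0) and (c,d) ≠ (0,0), all four partial derivatives ∂F/∂X, ∂F/∂Y, ∂F/∂Z, ∂F/∂W vanish at (a,b,c,d) if and only if there exist nonzero scalars u, v ∈ ℂ with ((a,b),(c,d)) = ((0,u),(0,v)) or ((a,b),(c,d)) = ((u,0),(v,0)). Consequently, the (4,4)-curve C₅ = {F = 0} ⊂ ℙ¹ × ℙ¹ has exactly two singular points, P = ([0:1],[0:1]) and Q = ([1:0],[1:0]). -/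
/-!
Write `p = a d²` and `q = b c²`. The partial derivatives in `Z` and `W` factor as
`2ab²c (p + 2q)` and `2a²bd (q + 2p)`. If `a`, `b`, `c`, `d` are all nonzero, then
`p + 2q = q + 2p = 0` forces `p = 0`, a contradiction. If `a = 0`, the `X`-derivative reduces to
`b³c⁴`, so `c = 0`; if `b = 0`, the `Y`-derivative reduces to `a³d⁴`, so `d = 0`. If `ab ≠ 0`
and one of `c`, `d` vanishes, the same two derivatives (now `a³d⁴` and `b³c⁴`) make the other
vanish too, which is excluded. The converse is a substitution.
-/

open MvPolynomial

/-- Singular locus of the maximally degenerate `J_{2,0}`-curve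
`F = X²Y²Z²W² + XY³Z⁴ + X³YW⁴` on `ℙ¹ × ℙ¹`: all four partial derivatives vanish
at a representative `(a,b,c,d)` iff the point is `([0:1],[0:1])` or `([1:0],[1:0])`.
Variables `0,1,2,3` of `Fin 4` are `X,Y,Z,W`. -/
theorem singular_locus_J20_curve
    (F : MvPolynomial (Fin 4) ℂ)
    (hF : F = X 0 ^ 2 * X 1 ^ 2 * X 2 ^ 2 * X 3 ^ 2 + X 0 * X 1 ^ 3 * X 2 ^ 4 +
        X 0 ^ 3 * X 1 * X 3 ^ 4)
    (a b c d : ℂ) (hab : (a, b) ≠ (0, 0)) (hcd : (c, d) ≠ (0, 0)) :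
    (∀ i : Fin 4, eval ![a, b, c, d] (pderiv i F) = 0) ↔
    ∃ u v : ℂ, u ≠ 0 ∧ v ≠ 0 ∧
      ((a = 0 ∧ b = u ∧ c = 0 ∧ d = v) ∨ (a = u ∧ b = 0 ∧ c = v ∧ d = 0)) := by
  have key : (∀ i : Fin 4, eval ![a, b, c, d] (pderiv i F) = 0) ↔
      (2 * a * b ^ 2 * c ^ 2 * d ^ 2 + b ^ 3 * c ^ 4 + 3 * a ^ 2 * b * d ^ 4 = 0 ∧
       2 * a ^ 2 * b * c ^ 2 * d ^ 2 + 3 * a * b ^ 2 * c ^ 4 + a ^ 3 * d ^ 4 = 0 ∧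
       2 * a * b ^ 2 * c * (a * d ^ 2 + 2 * (b * c ^ 2)) = 0 ∧
       2 * a ^ 2 * b * d * (b * c ^ 2 + 2 * (a * d ^ 2)) = 0) := by
    subst hF
    simp only [Fin.forall_fin_succ, IsEmpty.forall_iff, and_true]
    refine and_congr ?_ (and_congr ?_ (and_congr ?_ ?_)) <;>
    · apply Eq.congr_left
      simp [pderiv_X, Derivation.leibniz, Derivation.leibniz_pow]
      ring
  rw [key]
  constructor
  · rintro ⟨hX, hY, hZ, hW⟩
    by_cases ha : a = 0
    · subst ha
      have hb : b ≠ 0 := by rintro rfl; exact hab rfl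
      have hc : c = 0 := by simpa [hb] using hX
      subst hc
      have hd : d ≠ 0 := by rintro rfl; exact hcd rfl
      exact ⟨b, d, hb, hd, Or.inl ⟨rfl, rfl, rfl, rfl⟩⟩
    by_cases hb : b = 0
    · subst hb
      have hd : d = 0 := by simpa [ha] using hY
      subst hd
      have hc : c ≠ 0 := by rintro rfl; exact hcd rfl
      exact ⟨a, c, ha, hc, Or.inr ⟨rfl, rfl, rfl, rfl⟩⟩
    exfalso
    by_cases hc : c = 0
    · subst hc
      have hd : d = 0 := by simpa [ha] using hY
      exact hcd (by rw [hd])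
    by_cases hd : d = 0
    · subst hd
      have hc' : c = 0 := by simpa [hb] using hX
      exact hc hc'
    have h1 : a * d ^ 2 + 2 * (b * c ^ 2) = 0 := by simpa [ha, hb, hc] using hZ
    have h2 : b * c ^ 2 + 2 * (a * d ^ 2) = 0 := by simpa [ha, hb, hd] using hW
    have h3 : a * d ^ 2 = 0 := by linear_combination (2 * h2 - h1) / 3
    simp [ha, hd] at h3
  · rintro ⟨u, v, -, -, ⟨rfl, -, rfl, -⟩ | ⟨-, rfl, -, rfl⟩⟩ <;> simp
end
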